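/- arXiv:2412.16109 — 2 statements merged into one kernel-verified Lean document; each statement's English description precedes it below -/
import Mathlib

section
/- Let d ≥ 1, p ∈ (1,∞), and β ∈ ℝ with β < d − p. Then for every smooth function u : ℝ^d → ℝ whose support is a compact subset of the punctured open unit ball B(0,1) ∖ {0}, one has ∫_{B(0,1)} |u(x)|^p |x|^{−(β+p)} dx ≤ (p/(d−p−β))^p ∫_{B(0,1)} |∇u(x)|^p |x|^{−β} dx. -/
/-!
The proof multiplies the radial field `x ↦ x` by `φ x = |u x| ^ p * ‖x‖ ^ (-(β + p))`, which is `C¹`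
with compact support because `u` vanishes near the origin. The divergence theorem gives
`d ∫ φ = -∫ φ'(x) x` (`integral_radial_deriv`), and the singular weight contributes `(β + p) φ` to
`-φ'(x) x`. With `c = d - p - β > 0` this reads
`c ∫ φ = -p ∫ |u| ^ (p - 2) u ∇u(x) · x ‖x‖ ^ (-(β + p))`.

Young's inequality for the pair `(|u| / ‖x‖) ^ (p - 1)`, `(p / c) |∇u|` bounds the right integrand
pointwise by `c (1 - 1 / p) φ + (c / p) (p / c) ^ p |∇u| ^ p ‖x‖ ^ (-β)` (`neg_radial_deriv_le`).
Integrating, and absorbing the multiple of the finite integral `∫ φ` on the left, gives the sharp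
constant directly, with no recourse to Hölder's inequality.
-/

open MeasureTheory Metric Set

/-- A function vanishing off a closed set that misses the origin keeps its regularity when it is
multiplied by an arbitrary power of `‖x‖`. -/
lemma contDiff_mul_norm_rpow {d : ℕ} {n : WithTop ℕ∞} {f : EuclideanSpace ℝ (Fin d) → ℝ}
    (hf : ContDiff ℝ n f) {K : Set (EuclideanSpace ℝ (Fin d))} (hK : IsClosed K)
    (h0 : (0 : EuclideanSpace ℝ (Fin d)) ∉ K) (hfK : ∀ x, x ∉ K → f x = 0) (s : ℝ) :
    ContDiff ℝ n (fun x => f x * ‖x‖ ^ s) := by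
  rw [contDiff_iff_contDiffAt]
  intro x
  by_cases hx : x = 0
  · subst hx
    have h : (fun x => f x * ‖x‖ ^ s) =ᶠ[nhds 0] fun _ => (0 : ℝ) := by
      filter_upwards [hK.isOpen_compl.mem_nhds h0] with y hy
      rw [hfK y hy, zero_mul]
    exact contDiffAt_const.congr_of_eventuallyEq h
  · exact hf.contDiffAt.mul ((contDiffAt_norm ℝ hx).rpow_const_of_ne (norm_ne_zero_iff.mpr hx))

/-- The divergence theorem for the field `x ↦ φ x • x`. -/
lemma integral_radial_deriv {d : ℕ} {φ : EuclideanSpace ℝ (Fin d) → ℝ} (hφ : ContDiff ℝ 1 φ)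
    (hc : HasCompactSupport φ) :
    Integrable (fun x => fderiv ℝ φ x x) ∧ (d : ℝ) * ∫ x, φ x = -∫ x, fderiv ℝ φ x x := by
  have hφ' : Continuous (fderiv ℝ φ) := hφ.continuous_fderiv one_ne_zero
  have hint (i : Fin d) :
      Integrable (fun x => fderiv ℝ φ x (EuclideanSpace.single i 1) * x i) := by
    refine Continuous.integrable_of_hasCompactSupport (by fun_prop) ?_
    exact (hc.fderiv_apply (𝕜 := ℝ) _).mul_right
  have hsum (x : EuclideanSpace ℝ (Fin d)) :
      fderiv ℝ φ x x = ∑ i, fderiv ℝ φ x (EuclideanSpace.single i 1) * x i := by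
    conv_lhs => enter [2]; rw [← (EuclideanSpace.basisFun (Fin d) ℝ).sum_repr x]
    rw [map_sum]
    refine Finset.sum_congr rfl fun i _ => ?_
    rw [map_smul]
    simp [mul_comm]
  have hparts (i : Fin d) :
      ∫ x, φ x = -∫ x, fderiv ℝ φ x (EuclideanSpace.single i 1) * x i := by
    have hd (x : EuclideanSpace ℝ (Fin d)) :
        HasFDerivAt (fun y : EuclideanSpace ℝ (Fin d) => y i)
          (EuclideanSpace.proj i : EuclideanSpace ℝ (Fin d) →L[ℝ] ℝ) x :=
      (EuclideanSpace.proj i : EuclideanSpace ℝ (Fin d) →L[ℝ] ℝ).hasFDerivAt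
    have hone : (fun x => φ x * fderiv ℝ (fun y : EuclideanSpace ℝ (Fin d) => y i) x
        (EuclideanSpace.single i 1)) = φ := by
      funext x
      rw [(hd x).fderiv]
      simp
    have h := integral_mul_fderiv_eq_neg_fderiv_mul_of_integrable (μ := volume) (f := φ)
      (g := fun y : EuclideanSpace ℝ (Fin d) => y i) (v := EuclideanSpace.single i 1) (hint i)
      (by rw [hone]; exact hφ.continuous.integrable_of_hasCompactSupport hc)
      (Continuous.integrable_of_hasCompactSupport
        (hφ.continuous.mul (by fun_prop)) hc.mul_right)
      (fun x _ => hφ.differentiable one_ne_zero x) (fun x _ => (hd x).differentiableAt)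
    rw [hone] at h
    exact h
  simp_rw [hsum]
  refine ⟨integrable_finsetSum _ fun i _ => hint i, ?_⟩
  rw [integral_finsetSum _ fun i _ => hint i, ← Finset.sum_neg_distrib,
    ← Finset.sum_congr rfl fun i _ => hparts i]
  simp

/-- Young's inequality, with the scaling `p / c` that makes the Hardy constant sharp. The numbers
`a`, `b`, `r` stand for `|u x|`, `‖fderiv ℝ u x‖` and `‖x‖`. -/
lemma young_weighted {p β c a b r : ℝ} (hp : 1 < p) (hc : 0 < c) (ha : 0 ≤ a) (hb : 0 ≤ b)
    (hr : 0 < r) :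
    p * a ^ (p - 1) * (b * r) * r ^ (-(β + p)) ≤
      c * (1 - 1 / p) * (a ^ p * r ^ (-(β + p))) + c / p * (p / c) ^ p * (b ^ p * r ^ (-β)) := by
  have hp0 : 0 < p := by linarith
  have hp1 : 0 < p - 1 := by linarith
  have hy := Real.young_inequality_of_nonneg (a := p / c * b) (b := (a / r) ^ (p - 1))
    (by positivity) (by positivity) (Real.HolderConjugate.conjExponent hp)
  have e1 : ((a / r) ^ (p - 1)) ^ p.conjExponent = a ^ p * r ^ (-p) := by
    rw [← Real.rpow_mul (by positivity), Real.conjExponent, mul_div_cancel₀ _ hp1.ne',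
      Real.div_rpow ha hr.le, Real.rpow_neg hr.le, div_eq_mul_inv]
  have e2 : (a / r) ^ (p - 1) = a ^ (p - 1) * (r * r ^ (-p)) := by
    rw [Real.div_rpow ha hr.le, Real.rpow_sub_one hr.ne', Real.rpow_neg hr.le]
    field_simp
  have e3 : r ^ (-(β + p)) = r ^ (-p) * r ^ (-β) := by
    rw [← Real.rpow_add hr]; congr 1; ring
  rw [e1, e2, Real.mul_rpow (by positivity) hb, Real.conjExponent] at hy
  have h := mul_le_mul_of_nonneg_left hy (show 0 ≤ c * r ^ (-β) by positivity)
  rw [e3]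
  calc _ = c * r ^ (-β) * (p / c * b * (a ^ (p - 1) * (r * r ^ (-p)))) := by
        field_simp
    _ ≤ _ := h
    _ = _ := by field_simp; ring

/-- The pointwise inequality whose integral is Hardy's inequality. -/
lemma neg_radial_deriv_le {d : ℕ} {p β c : ℝ} (hp : 1 < p) (hc : 0 < c)
    {u : EuclideanSpace ℝ (Fin d) → ℝ} {x : EuclideanSpace ℝ (Fin d)}
    (hu : DifferentiableAt ℝ u x) (hx : x ≠ 0) :
    -fderiv ℝ (fun x => |u x| ^ p * ‖x‖ ^ (-(β + p))) x x ≤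
      (β + p + c * (1 - 1 / p)) * (|u x| ^ p * ‖x‖ ^ (-(β + p))) +
        c / p * (p / c) ^ p * (‖fderiv ℝ u x‖ ^ p * ‖x‖ ^ (-β)) := by
  have hr : 0 < ‖x‖ := norm_pos_iff.mpr hx
  have h1 : HasFDerivAt (fun x => |u x| ^ p) _ x :=
    (hasDerivAt_abs_rpow (u x) hp).comp_hasFDerivAt x hu.hasFDerivAt
  -- `‖x‖ ^ s` is differentiated as `(‖x‖ ^ 2) ^ (s / 2)`.
  have h2 : HasFDerivAt (fun x : EuclideanSpace ℝ (Fin d) => (‖x‖ ^ 2) ^ (-(β + p) / 2)) _ x :=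
    (hasStrictFDerivAt_norm_sq x).hasFDerivAt.rpow_const (Or.inl (by positivity))
  have e (y : EuclideanSpace ℝ (Fin d)) : (‖y‖ ^ 2) ^ (-(β + p) / 2) = ‖y‖ ^ (-(β + p)) := by
    rw [← Real.rpow_natCast, ← Real.rpow_mul (norm_nonneg y)]
    congr 1
    push_cast
    ring
  simp_rw [e] at h2
  have h3 : (-(β + p) / 2 * (‖x‖ ^ 2) ^ (-(β + p) / 2 - 1)) * (2 * ‖x‖ ^ 2)
      = -(β + p) * ‖x‖ ^ (-(β + p)) := by
    rw [Real.rpow_sub_one (by positivity), e]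
    field_simp
  have key : fderiv ℝ (fun x => |u x| ^ p * ‖x‖ ^ (-(β + p))) x x =
      |u x| ^ p * (-(β + p) * ‖x‖ ^ (-(β + p))) +
        ‖x‖ ^ (-(β + p)) * (p * |u x| ^ (p - 2) * u x * fderiv ℝ u x x) := by
    rw [HasFDerivAt.fderiv (f := fun x => |u x| ^ p * ‖x‖ ^ (-(β + p))) (h1.mul h2), ← h3]
    simp
  have habs : |u x| ^ (p - 2) * |u x| = |u x| ^ (p - 1) := by
    rcases eq_or_ne (u x) 0 with h | h
    · rw [h, abs_zero, mul_zero, Real.zero_rpow (by linarith)]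
    · rw [← Real.rpow_add_one (abs_ne_zero.mpr h)]; congr 1; ring
  have hle : -(p * |u x| ^ (p - 2) * u x * fderiv ℝ u x x) ≤
      p * |u x| ^ (p - 1) * (‖fderiv ℝ u x‖ * ‖x‖) := by
    refine (neg_le_abs _).trans ?_
    rw [abs_mul, abs_mul, abs_of_nonneg (show 0 ≤ p * |u x| ^ (p - 2) by positivity),
      mul_assoc p, habs]
    gcongr
    exact (fderiv ℝ u x).le_opNorm x
  have hY := young_weighted (β := β) hp hc (abs_nonneg (u x)) (norm_nonneg (fderiv ℝ u x)) hr
  have hle' := mul_le_mul_of_nonneg_right hle (show 0 ≤ ‖x‖ ^ (-(β + p)) by positivity)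
  rw [key]
  linarith

/-- **Hardy inequality near the singular point** (case `β < d - p`).
For every smooth `u : ℝ^d → ℝ` whose support is a compact subset of the punctured open unit
ball `B(0,1) \ {0}`, one has
`∫_{B(0,1)} |u(x)|^p |x|^{-(β+p)} dx ≤ (p/(d-p-β))^p ∫_{B(0,1)} |∇u(x)|^p |x|^{-β} dx`. -/
theorem stmt1 (d : ℕ) (hd : 1 ≤ d) (p β : ℝ) (hp : 1 < p)
    (hβ : β < (d : ℝ) - p)
    (u : EuclideanSpace ℝ (Fin d) → ℝ) (hu : ContDiff ℝ (⊤ : ℕ∞) u)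
    (hucpt : IsCompact (tsupport u))
    (husupp : tsupport u ⊆ ball (0 : EuclideanSpace ℝ (Fin d)) 1 \ {0}) :
    ∫ x in ball (0 : EuclideanSpace ℝ (Fin d)) 1, |u x| ^ p * ‖x‖ ^ (-(β + p)) ≤
      (p / ((d : ℝ) - p - β)) ^ p *
        ∫ x in ball (0 : EuclideanSpace ℝ (Fin d)) 1, ‖fderiv ℝ u x‖ ^ p * ‖x‖ ^ (-β) := by
  set K := tsupport u with hK
  have hKc : IsClosed K := isClosed_tsupport u
  have h0 : (0 : EuclideanSpace ℝ (Fin d)) ∉ K := fun h => (husupp h).2 rfl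
  have hp0 : 0 < p := by linarith
  have hc : 0 < (d : ℝ) - p - β := by linarith
  set c := (d : ℝ) - p - β with hcdef
  have hu1 : ContDiff ℝ 1 u := hu.of_le (by exact_mod_cast le_top)
  have hfK (x) (hx : x ∉ K) : |u x| ^ p = 0 := by
    rw [image_eq_zero_of_notMem_tsupport hx, abs_zero, Real.zero_rpow hp0.ne']
  have hgK (x) (hx : x ∉ K) : ‖fderiv ℝ u x‖ ^ p = 0 := by
    rw [image_eq_zero_of_notMem_tsupport fun h => hx (tsupport_fderiv_subset ℝ h), norm_zero,
      Real.zero_rpow hp0.ne']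
  have hball (x) (hx : x ∉ ball (0 : EuclideanSpace ℝ (Fin d)) 1) : x ∉ K :=
    fun h => hx (husupp h).1
  rw [setIntegral_eq_integral_of_forall_compl_eq_zero
      fun x hx => by rw [hfK x (hball x hx), zero_mul],
    setIntegral_eq_integral_of_forall_compl_eq_zero
      fun x hx => by rw [hgK x (hball x hx), zero_mul]]
  have hφ : ContDiff ℝ 1 (fun x => |u x| ^ p * ‖x‖ ^ (-(β + p))) :=
    contDiff_mul_norm_rpow (hu1.norm_rpow hp) hKc h0 hfK _
  have hφc : HasCompactSupport (fun x => |u x| ^ p * ‖x‖ ^ (-(β + p))) :=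
    HasCompactSupport.intro hucpt fun x hx => by rw [hfK x hx, zero_mul]
  have hφi := hφ.continuous.integrable_of_hasCompactSupport (μ := volume) hφc
  have hψi : Integrable (fun x => ‖fderiv ℝ u x‖ ^ p * ‖x‖ ^ (-β)) := by
    refine Continuous.integrable_of_hasCompactSupport ?_
      (HasCompactSupport.intro hucpt fun x hx => by rw [hgK x hx, zero_mul])
    refine contDiff_zero.mp (contDiff_mul_norm_rpow (contDiff_zero.mpr ?_) hKc h0 hgK _)
    exact (hu1.continuous_fderiv one_ne_zero).norm.rpow_const fun _ => Or.inr hp0.le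
  obtain ⟨hdi, hdiv⟩ := integral_radial_deriv hφ hφc
  have hmono : -∫ x, fderiv ℝ (fun x => |u x| ^ p * ‖x‖ ^ (-(β + p))) x x ≤
      ∫ x, ((β + p + c * (1 - 1 / p)) * (|u x| ^ p * ‖x‖ ^ (-(β + p))) +
        c / p * (p / c) ^ p * (‖fderiv ℝ u x‖ ^ p * ‖x‖ ^ (-β))) := by
    rw [← integral_neg]
    refine integral_mono hdi.neg ((hφi.const_mul _).add (hψi.const_mul _)) fun x => ?_
    by_cases hx : x = 0
    · subst hx
      -- The radial derivative vanishes at the origin, where every term on the right is zero.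
      simp [hfK _ h0, hgK _ h0]
    · exact neg_radial_deriv_le hp hc (hu1.differentiable one_ne_zero x) hx
  rw [integral_add (hφi.const_mul _) (hψi.const_mul _), integral_const_mul, integral_const_mul,
    ← hdiv] at hmono
  set X := ∫ x, |u x| ^ p * ‖x‖ ^ (-(β + p))
  set Y := ∫ x, ‖fderiv ℝ u x‖ ^ p * ‖x‖ ^ (-β)
  have hd' : (d : ℝ) = c + (β + p) := by rw [hcdef]; ring
  rw [hd'] at hmono
  have hfin : c / p * X ≤ c / p * ((p / c) ^ p * Y) := by
    have : c * (1 - 1 / p) = c - c / p := by ring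
    rw [this] at hmono
    linarith
  exact le_of_mul_le_mul_left hfin (by positivity)
end

section
/- Assume the domain, weight, localization and kernel setting below with d ≥ 1, p ∈ (1,∞), and β ∈ ℝ. Then there exist constants 0 < c ≤ C, depending only on d, p, β, ρ, κ₀ and κ₁, such that for every δ ∈ (0, 1/(3κ₀²κ₁)) and every measurable u : Ω → ℝ (with all quantities possibly +∞): c·[u]_{𝔚^p[δ](Ω;β)} ≤ ( ∫_Ω ∫_Ω γ(x)^{−β} ρ(|x−y|/(δλ(x))) |u(y)−u(x)|^p (δλ(x))^{−(d+p)} dy dx )^{1/p} ≤ C·[u]_{𝔚^p[δ](Ω;β)}. -/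
/-!
Write `F(t)` for the energy with localization radius `t η` and fixed weight `γ^{-β} η^{-(d+p)}`.
It is nondecreasing in `t`, and since `λ` is comparable to `η` and `ρ` is bounded above by a
multiple of `1_{[0,1)}` and below by a multiple of `1_{[0,cρ]}`, the `ρ`-energy lies between
multiples of `δ^{-(d+p)} F(cρ δ / κ₀)` and `δ^{-(d+p)} F(κ₀ δ)` (`le_rhoEnergy`, `rhoEnergy_le`).
The seminorm itself is a multiple of `δ^{-(d+p)} F(δ)` (`nlEnergy_eq`), so everything reduces to
`F(κ₀ δ) ≤ D F(cρ δ / κ₀)` with `D` independent of the domain, of `δ` and of `u`.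

This follows by iterating `F(t) ≤ C F(3t/4)` (`cutEnergy_le_step`). For `|x - y| < t η(x)` with
midpoint `m`, the increment `u(y) - u(x)` splits into increments from `m` to `x` and to `y`. After
the change of variables `y ↦ m` (with factor `2^d`) the first part is controlled by `F(t/2)`. In the
second the roles of `x` and `y` are exchanged by Tonelli's theorem, which is possible because
`γ` and `η` vary by bounded factors on `B(x, t η(x))` when `3 κ₀ κ₁ t ≤ 1` (`wgt_compare`); this uses
`η ≤ dist(·, Γ) ≤ κ₀ γ`, hence `Γ ⊆ ∂Ω` (`subset_frontier_diff`). The bound `δ < 1/(3κ₀²κ₁)` is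
exactly what makes `t = κ₀ δ` admissible.
-/

open MeasureTheory Metric Set Filter
open scoped ENNReal NNReal Topology

noncomputable section

/-- Euclidean space `ℝ^d`. -/
abbrev Euc (d : ℕ) : Type := EuclideanSpace ℝ (Fin d)

/-- The constant `C̄_{d,p} = √π Γ((d+p)/2) / (Γ((p+1)/2) Γ(d/2))`. -/
def Cbar (d : ℕ) (p : ℝ) : ℝ :=
  Real.sqrt Real.pi * Real.Gamma (((d : ℝ) + p) / 2) /
    (Real.Gamma ((p + 1) / 2) * Real.Gamma ((d : ℝ) / 2))

/-- The surface measure `σ(𝕊^{d-1}) = 2 π^{d/2} / Γ(d/2)` of the unit sphere in `ℝ^d`. -/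
def sphArea (d : ℕ) : ℝ := 2 * Real.pi ^ ((d : ℝ) / 2) / Real.Gamma ((d : ℝ) / 2)

/-- The normalizing constant `C̄_{d,p} (d+p) / σ(𝕊^{d-1})` of the nonlocal seminorm. -/
def normC (d : ℕ) (p : ℝ) : ℝ := Cbar d p * ((d : ℝ) + p) / sphArea d

/-- The distance `η(x) = dist(x, ∂Ω)` to the boundary of `Ω`. -/
def etaD {d : ℕ} (Ω : Set (Euc d)) (x : Euc d) : ℝ := Metric.infDist x (frontier Ω)

/-- The `p`-th power `[u]_{𝔚^p[δ](Ω;β)}^p` of the weighted nonlocal seminorm. -/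
def nlEnergy (d : ℕ) (Ω : Set (Euc d)) (γ : Euc d → ℝ) (p β δ : ℝ) (u : Euc d → ℝ) : ℝ≥0∞ :=
  ENNReal.ofReal (normC d p) *
    ∫⁻ x in Ω, ∫⁻ y in ball x (δ * etaD Ω x),
      ENNReal.ofReal (γ x ^ (-β) * |u y - u x| ^ p / (δ * etaD Ω x) ^ ((d : ℝ) + p))

/-- The weighted nonlocal seminorm `[u]_{𝔚^p[δ](Ω;β)}`. -/
def semiW (d : ℕ) (Ω : Set (Euc d)) (γ : Euc d → ℝ) (p β δ : ℝ) (u : Euc d → ℝ) : ℝ≥0∞ :=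
  nlEnergy d Ω γ p β δ u ^ (1 / p)


/-! ### Energies with localization radius `t η` and their comparison -/

/-- The cut-off integrand `w(x) 1_{|x-y| < t η(x)} |u(y)-u(x)|^p`. -/
def cutIntegrand {d : ℕ} (w : Euc d → ℝ≥0∞) (η u : Euc d → ℝ) (p t : ℝ) (x y : Euc d) : ℝ≥0∞ :=
  if dist x y < t * η x then w x * ENNReal.ofReal (|u y - u x| ^ p) else 0

/-- The double integral of `cutIntegrand`: the energy with localization radius `t η`, without any
normalization in `t`. -/
def cutEnergy {d : ℕ} (w : Euc d → ℝ≥0∞) (η u : Euc d → ℝ) (p t : ℝ) : ℝ≥0∞ :=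
  ∫⁻ x, ∫⁻ y, cutIntegrand w η u p t x y

lemma measurable_cutIntegrand {d : ℕ} {w : Euc d → ℝ≥0∞} {η u : Euc d → ℝ} (p t : ℝ)
    (hw : Measurable w) (hη : Measurable η) (hu : Measurable u) :
    Measurable (Function.uncurry (cutIntegrand w η u p t)) := by
  unfold cutIntegrand Function.uncurry
  refine Measurable.ite (measurableSet_lt (by fun_prop) (by fun_prop)) ?_ measurable_const
  fun_prop

lemma lintegral_half {d : ℕ} (h : Euc d → ℝ≥0∞) (hh : Measurable h) (x : Euc d) :
    ∫⁻ y, h ((1 / 2 : ℝ) • (x + y)) = 2 ^ d * ∫⁻ y, h y := by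
  rw [lintegral_add_left_eq_self (fun z => h ((1 / 2 : ℝ) • z)) x,
    ← lintegral_map (f := h) (g := fun z : Euc d => (1 / 2 : ℝ) • z) hh (by fun_prop),
    Measure.map_addHaar_smul _ (by norm_num), lintegral_smul_measure]
  have : ENNReal.ofReal |((1 / 2 : ℝ) ^ Module.finrank ℝ (Euc d))⁻¹| = 2 ^ d := by
    rw [finrank_euclideanSpace_fin, abs_of_pos (by positivity), ← inv_pow,
      ENNReal.ofReal_pow (by norm_num)]
    norm_num
  rw [this, smul_eq_mul]

lemma rpow_le_two_rpow_mul {a b c p : ℝ} (hp : 0 < p) :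
    |a - c| ^ p ≤ 2 ^ p * (|b - c| ^ p + |b - a| ^ p) := by
  have h1 : |a - c| ≤ 2 * max |b - c| |b - a| := by
    have := abs_sub_le a b c
    rw [abs_sub_comm a b] at this
    linarith [le_max_left |b - c| |b - a|, le_max_right |b - c| |b - a|]
  have h2 : (max |b - c| |b - a|) ^ p ≤ |b - c| ^ p + |b - a| ^ p := by
    have h3 : 0 ≤ |b - c| ^ p := by positivity
    have h4 : 0 ≤ |b - a| ^ p := by positivity
    rcases max_cases |b - c| |b - a| with h | h <;> rw [h.1] <;> linarith
  calc |a - c| ^ p ≤ (2 * max |b - c| |b - a|) ^ p :=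
        Real.rpow_le_rpow (abs_nonneg _) h1 hp.le
    _ = 2 ^ p * (max |b - c| |b - a|) ^ p := Real.mul_rpow (by norm_num) (by positivity)
    _ ≤ _ := by gcongr

/-- Shrinking the radius from `t η` to `(3/4) t η`: the increment of `u` between `x` and `y` splits
at the midpoint, whose distance `|x-y|/2` to both end points is below the smaller radius. -/
lemma cutEnergy_le_step {d : ℕ} {w : Euc d → ℝ≥0∞} {η u : Euc d → ℝ} {p t : ℝ} {K : ℝ≥0∞}
    (hw : Measurable w) (hη : Measurable η) (hu : Measurable u) (hp : 0 < p)
    (hK : ∀ x y, w x ≠ 0 → dist x y < t * η x → w x ≤ K * w y ∧ t * η x ≤ 3 / 2 * (t * η y)) :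
    cutEnergy w η u p t ≤
      ENNReal.ofReal (2 ^ p) * ((1 + K) * 2 ^ d) * cutEnergy w η u p (3 / 4 * t) := by
  set g := cutIntegrand w η u p (3 / 4 * t) with hg
  have hgm := measurable_cutIntegrand p (3 / 4 * t) hw hη hu
  have hpt : ∀ x y, cutIntegrand w η u p t x y ≤
      ENNReal.ofReal (2 ^ p) * (g x ((1 / 2 : ℝ) • (x + y)) +
        K * g y ((1 / 2 : ℝ) • (y + x))) := by
    intro x y
    by_cases hxy : dist x y < t * η x
    swap
    · simp [cutIntegrand, hxy]
    by_cases hw0 : w x = 0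
    · simp [cutIntegrand, hw0]
    obtain ⟨h1, h2⟩ := hK x y hw0 hxy
    have e1 : dist x ((1 / 2 : ℝ) • (x + y)) = dist x y / 2 := by
      rw [dist_eq_norm, dist_eq_norm, show x - (1 / 2 : ℝ) • (x + y) = (1 / 2 : ℝ) • (x - y) by
        module, norm_smul]
      norm_num; ring
    have e2 : dist y ((1 / 2 : ℝ) • (y + x)) = dist x y / 2 := by
      rw [dist_eq_norm, dist_comm, dist_eq_norm,
        show y - (1 / 2 : ℝ) • (y + x) = (1 / 2 : ℝ) • (y - x) by module, norm_smul]
      norm_num; ring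
    have hd0 : 0 ≤ dist x y := dist_nonneg
    have c1 : dist x ((1 / 2 : ℝ) • (x + y)) < 3 / 4 * t * η x := by rw [e1]; linarith
    have c2 : dist y ((1 / 2 : ℝ) • (y + x)) < 3 / 4 * t * η y := by rw [e2]; linarith
    simp only [hg, cutIntegrand, if_pos hxy, if_pos c1, if_pos c2]
    rw [add_comm y x]
    set m := (1 / 2 : ℝ) • (x + y)
    calc w x * ENNReal.ofReal (|u y - u x| ^ p)
        ≤ w x * ENNReal.ofReal (2 ^ p * (|u m - u x| ^ p + |u m - u y| ^ p)) := by
          gcongr; exact rpow_le_two_rpow_mul hp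
      _ = ENNReal.ofReal (2 ^ p) * (w x * ENNReal.ofReal (|u m - u x| ^ p) +
            w x * ENNReal.ofReal (|u m - u y| ^ p)) := by
          rw [ENNReal.ofReal_mul (by positivity), ENNReal.ofReal_add (by positivity)
            (by positivity)]
          ring
      _ ≤ ENNReal.ofReal (2 ^ p) * (w x * ENNReal.ofReal (|u m - u x| ^ p) +
            K * w y * ENNReal.ofReal (|u m - u y| ^ p)) := by gcongr
      _ = _ := by ring
  have hm1 : Measurable (Function.uncurry fun x y : Euc d => g x ((1 / 2 : ℝ) • (x + y))) :=
    hgm.comp (f := fun q : Euc d × Euc d => (q.1, (1 / 2 : ℝ) • (q.1 + q.2))) (by fun_prop)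
  have hm2 : Measurable (Function.uncurry fun x y : Euc d => g y ((1 / 2 : ℝ) • (y + x))) :=
    hgm.comp (f := fun q : Euc d × Euc d => (q.2, (1 / 2 : ℝ) • (q.2 + q.1))) (by fun_prop)
  have hF : ∫⁻ x, ∫⁻ y, g x ((1 / 2 : ℝ) • (x + y)) =
      2 ^ d * cutEnergy w η u p (3 / 4 * t) := by
    rw [cutEnergy, ← lintegral_const_mul _ hgm.lintegral_prod_right]
    exact lintegral_congr fun x => lintegral_half _ hgm.of_uncurry_left x
  have hF2 : ∫⁻ x, ∫⁻ y, g y ((1 / 2 : ℝ) • (y + x)) =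
      2 ^ d * cutEnergy w η u p (3 / 4 * t) := by
    rw [lintegral_lintegral_swap hm2.aemeasurable, hF]
  calc cutEnergy w η u p t
      ≤ ∫⁻ x, ∫⁻ y, ENNReal.ofReal (2 ^ p) * (g x ((1 / 2 : ℝ) • (x + y)) +
        K * g y ((1 / 2 : ℝ) • (y + x))) :=
        lintegral_mono fun x => lintegral_mono fun y => hpt x y
    _ = ∫⁻ x, ENNReal.ofReal (2 ^ p) * ((∫⁻ y, g x ((1 / 2 : ℝ) • (x + y))) +
        K * ∫⁻ y, g y ((1 / 2 : ℝ) • (y + x))) := by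
        refine lintegral_congr fun x => ?_
        have a1 : Measurable fun y => g x ((1 / 2 : ℝ) • (x + y)) := hm1.of_uncurry_left
        have a2 : Measurable fun y => g y ((1 / 2 : ℝ) • (y + x)) := hm2.of_uncurry_left
        rw [lintegral_const_mul' _ _ ENNReal.ofReal_ne_top, lintegral_add_left a1,
          lintegral_const_mul _ a2]
    _ = ENNReal.ofReal (2 ^ p) * (2 ^ d * cutEnergy w η u p (3 / 4 * t) +
        K * (2 ^ d * cutEnergy w η u p (3 / 4 * t))) := by
        have b1 := hm1.lintegral_prod_right (ν := (volume : Measure (Euc d)))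
        have b2 := hm2.lintegral_prod_right (ν := (volume : Measure (Euc d)))
        rw [lintegral_const_mul' _ _ ENNReal.ofReal_ne_top, lintegral_add_left b1,
          lintegral_const_mul _ b2, hF, hF2]
    _ = _ := by ring

lemma cutEnergy_mono {d : ℕ} {w : Euc d → ℝ≥0∞} {η u : Euc d → ℝ} {p s t : ℝ}
    (hη : ∀ x, 0 ≤ η x) (hst : s ≤ t) : cutEnergy w η u p s ≤ cutEnergy w η u p t := by
  refine lintegral_mono fun x => lintegral_mono fun y => ?_
  unfold cutIntegrand
  split_ifs with h1 h2
  · exact le_rfl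
  · exact absurd (h1.trans_le (mul_le_mul_of_nonneg_right hst (hη x))) h2
  · exact zero_le
  · exact le_rfl

lemma cutEnergy_le_iterate {d : ℕ} {w : Euc d → ℝ≥0∞} {η u : Euc d → ℝ} {p T : ℝ} {K : ℝ≥0∞}
    (hw : Measurable w) (hη : Measurable η) (hu : Measurable u) (hp : 0 < p)
    (hK : ∀ t, 0 < t → t ≤ T → ∀ x y, w x ≠ 0 → dist x y < t * η x →
      w x ≤ K * w y ∧ t * η x ≤ 3 / 2 * (t * η y)) (hT : 0 < T) (n : ℕ) :
    cutEnergy w η u p T ≤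
      (ENNReal.ofReal (2 ^ p) * ((1 + K) * 2 ^ d)) ^ n * cutEnergy w η u p ((3 / 4) ^ n * T) := by
  induction n with
  | zero => simp
  | succ n ih =>
    refine ih.trans ?_
    have hn : (3 / 4 : ℝ) ^ n ≤ 1 := pow_le_one₀ (by norm_num) (by norm_num)
    have := cutEnergy_le_step (t := (3 / 4) ^ n * T) hw hη hu hp
      (hK _ (by positivity) (by nlinarith))
    rw [show (3 / 4 : ℝ) ^ (n + 1) * T = 3 / 4 * ((3 / 4) ^ n * T) by ring, pow_succ, mul_assoc]
    gcongr

/-! ### The distance to the boundary and the weight -/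

lemma ball_etaD_subset {d : ℕ} {Ω : Set (Euc d)} {x : Euc d} (hx : x ∈ Ω) :
    ball x (etaD Ω x) ⊆ Ω := by
  intro y hy
  by_contra hyΩ
  obtain ⟨z, hz, hz2⟩ := exists_mem_frontier_infDist_compl_eq_dist hx
    (fun h => hyΩ (h ▸ mem_univ y))
  have h1 : etaD Ω x ≤ dist x z := infDist_le_dist_of_mem hz
  have h2 : infDist x Ωᶜ ≤ dist x y := infDist_le_dist_of_mem hyΩ
  rw [mem_ball, dist_comm] at hy
  linarith

lemma etaD_le_add {d : ℕ} (Ω : Set (Euc d)) (x y : Euc d) :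
    etaD Ω x ≤ etaD Ω y + dist x y := infDist_le_infDist_add_dist

lemma etaD_pos {d : ℕ} {Ω : Set (Euc d)} (hΩ : IsOpen Ω) (hne : (frontier Ω).Nonempty)
    {x : Euc d} (hx : x ∈ Ω) : 0 < etaD Ω x := by
  rw [etaD, ← isClosed_frontier.notMem_iff_infDist_pos hne]
  intro h
  rw [hΩ.frontier_eq] at h
  exact h.2 hx

/-- Removing finitely many points from an open set keeps them in the closure, because `ℝ^d` has no
isolated points for `d ≥ 1`. -/
lemma subset_frontier_diff {d : ℕ} (hd : 1 ≤ d) {Ωs Γ : Set (Euc d)} (hΩ : IsOpen Ωs)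
    (hΓ : Γ.Finite) (hsub : Γ ⊆ closure Ωs) : Γ ⊆ frontier (Ωs \ Γ) := by
  have : Nonempty (Fin d) := ⟨⟨0, hd⟩⟩
  have hdense : Dense Γᶜ := hΓ.countable.dense_compl ℝ
  intro x hx
  rw [(hΩ.sdiff hΓ.isClosed).frontier_eq]
  refine ⟨?_, fun h => h.2 hx⟩
  rw [Set.sdiff_eq]
  exact closure_minimal (hdense.open_subset_closure_inter hΩ) isClosed_closure (hsub hx)

/-- If `a` and `b` agree up to a factor `2`, so do their powers up to `2^|s|`. -/
lemma rpow_le_two_rpow_abs {a b s : ℝ} (ha : 0 < a) (hb : 0 < b) (h1 : a ≤ 2 * b)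
    (h2 : b ≤ 2 * a) : a ^ s ≤ 2 ^ |s| * b ^ s := by
  rcases le_total 0 s with hs | hs
  · rw [abs_of_nonneg hs, ← Real.mul_rpow (by norm_num) hb.le]
    exact Real.rpow_le_rpow ha.le h1 hs
  · rw [abs_of_nonpos hs, Real.rpow_neg (by norm_num), ← Real.inv_rpow (by norm_num),
      ← Real.mul_rpow (by norm_num) hb.le]
    exact Real.rpow_le_rpow_of_nonpos (by positivity) (by linarith) hs

lemma normC_pos {d : ℕ} (hd : 1 ≤ d) {p : ℝ} (hp : 1 < p) : 0 < normC d p := by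
  have hd' : (0 : ℝ) < d := by exact_mod_cast hd
  unfold normC Cbar sphArea
  have h1 := Real.Gamma_pos_of_pos (s := ((d : ℝ) + p) / 2) (by linarith)
  have h2 := Real.Gamma_pos_of_pos (s := (p + 1) / 2) (by linarith)
  have h3 := Real.Gamma_pos_of_pos (s := (d : ℝ) / 2) (by linarith)
  have := Real.pi_pos
  positivity

/-- The weight `γ^{-β} η^{-(d+p)}` on `Ω`, extended by zero. -/
def wgt {d : ℕ} (Ω : Set (Euc d)) (γ : Euc d → ℝ) (p β : ℝ) : Euc d → ℝ≥0∞ :=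
  Ω.indicator fun x => ENNReal.ofReal (γ x ^ (-β) * etaD Ω x ^ (-((d : ℝ) + p)))

lemma measurable_wgt {d : ℕ} {Ω : Set (Euc d)} {γ : Euc d → ℝ} {p β : ℝ} (hΩ : IsOpen Ω)
    (hγ : ContinuousOn γ Ω) (hγ0 : ∀ x ∈ Ω, 0 < γ x) (hη0 : ∀ x ∈ Ω, 0 < etaD Ω x) :
    Measurable (wgt Ω γ p β) := by
  have hc : ContinuousOn (fun x => ENNReal.ofReal (γ x ^ (-β) * etaD Ω x ^ (-((d : ℝ) + p)))) Ω :=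
    ENNReal.continuous_ofReal.comp_continuousOn
      ((hγ.rpow_const fun x hx => Or.inl (hγ0 x hx).ne').mul
        ((continuous_infDist_pt _).continuousOn.rpow_const fun x hx => Or.inl (hη0 x hx).ne'))
  classical
  rw [wgt, ← piecewise_eq_indicator]
  exact hc.measurable_piecewise continuous_zero.continuousOn hΩ.measurableSet

/-- The weight and `η` vary by bounded factors on the balls `B(x, t η(x))` with
`3 κ₀ κ₁ t ≤ 1`. -/
lemma wgt_compare {d : ℕ} {Ω : Set (Euc d)} {γ : Euc d → ℝ} {p β κ₀ κ₁ t : ℝ}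
    (hκ₀ : 1 ≤ κ₀) (hκ₁ : 1 ≤ κ₁)
    (hγ : LipschitzOnWith (Real.toNNReal κ₁) γ Ω) (hγ0 : ∀ x ∈ Ω, 0 < γ x)
    (hη0 : ∀ x ∈ Ω, 0 < etaD Ω x) (hηγ : ∀ x ∈ Ω, etaD Ω x ≤ κ₀ * γ x)
    (ht0 : 0 < t) (ht : 3 * κ₀ * κ₁ * t ≤ 1) {x y : Euc d} (hx : x ∈ Ω)
    (hxy : dist x y < t * etaD Ω x) :
    y ∈ Ω ∧ wgt Ω γ p β x ≤ ENNReal.ofReal (2 ^ |-β| * 2 ^ |-((d : ℝ) + p)|) * wgt Ω γ p β y ∧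
      t * etaD Ω x ≤ 3 / 2 * (t * etaD Ω y) := by
  have hηx := hη0 x hx
  have hκκ : 1 ≤ κ₀ * κ₁ := one_le_mul_of_one_le_of_one_le hκ₀ hκ₁
  have ht3 : 3 * t ≤ 1 := by nlinarith
  have hd3 : 3 * dist x y < etaD Ω x := by nlinarith
  have hy : y ∈ Ω := ball_etaD_subset hx (by
    rw [mem_ball, dist_comm]; linarith [dist_nonneg (x := x) (y := y)])
  have e1 := etaD_le_add Ω x y
  have e2 := etaD_le_add Ω y x
  rw [dist_comm] at e2
  have g1 := hγ.dist_le_mul x hx y hy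
  rw [Real.coe_toNNReal _ (by linarith), Real.dist_eq] at g1
  have g2 : κ₁ * dist x y ≤ γ x / 3 := by
    have h1 : κ₁ * dist x y ≤ κ₁ * (t * (κ₀ * γ x)) := by
      gcongr
      exact hxy.le.trans (by gcongr; exact hηγ x hx)
    have h2 := mul_le_mul_of_nonneg_right ht (hγ0 x hx).le
    nlinarith
  have g3 := abs_le.mp (g1.trans g2)
  have g4 := hγ0 x hx
  refine ⟨hy, ?_, by nlinarith⟩
  rw [wgt, indicator_of_mem hx, indicator_of_mem hy, ← ENNReal.ofReal_mul (by positivity)]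
  apply ENNReal.ofReal_le_ofReal
  have r1 := rpow_le_two_rpow_abs (s := -β) (hγ0 x hx) (hγ0 y hy) (by linarith) (by linarith)
  have r2 := rpow_le_two_rpow_abs (s := -((d : ℝ) + p)) hηx (hη0 y hy) (by linarith)
    (by linarith)
  calc _ ≤ (2 ^ |-β| * γ y ^ (-β)) * (2 ^ |-((d : ℝ) + p)| * etaD Ω y ^ (-((d : ℝ) + p))) := by
        gcongr
        have := hγ0 y hy
        positivity
    _ = _ := by ring

/-! ### Both seminorms in terms of `cutEnergy` -/

lemma nlEnergy_eq {d : ℕ} {Ω : Set (Euc d)} {γ u : Euc d → ℝ} {p β δ : ℝ}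
    (hΩ : MeasurableSet Ω) (hδ : 0 < δ) (hγ0 : ∀ x ∈ Ω, 0 < γ x)
    (hη0 : ∀ x ∈ Ω, 0 < etaD Ω x) :
    nlEnergy d Ω γ p β δ u = ENNReal.ofReal (normC d p) *
      (ENNReal.ofReal (δ ^ (-((d : ℝ) + p))) * cutEnergy (wgt Ω γ p β) (etaD Ω) u p δ) := by
  rw [nlEnergy, cutEnergy, ← lintegral_indicator hΩ]
  congr 1
  rw [← lintegral_const_mul' _ _ ENNReal.ofReal_ne_top]
  refine lintegral_congr fun x => ?_
  by_cases hx : x ∈ Ω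
  · rw [indicator_of_mem hx, ← lintegral_indicator measurableSet_ball,
      ← lintegral_const_mul' _ _ ENNReal.ofReal_ne_top]
    refine lintegral_congr fun y => ?_
    by_cases hy : dist x y < δ * etaD Ω x
    · have hy' : y ∈ ball x (δ * etaD Ω x) := by rwa [mem_ball, dist_comm]
      have h1 := hγ0 x hx
      have h2 := hη0 x hx
      rw [indicator_of_mem hy', cutIntegrand, if_pos hy, wgt, indicator_of_mem hx,
        ← ENNReal.ofReal_mul (by positivity), ← ENNReal.ofReal_mul (by positivity)]
      congr 1
      rw [div_eq_mul_inv, ← Real.rpow_neg (by positivity), Real.mul_rpow hδ.le h2.le]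
      ring
    · have hy' : y ∉ ball x (δ * etaD Ω x) := by rwa [mem_ball, dist_comm]
      rw [indicator_of_notMem hy', cutIntegrand, if_neg hy, mul_zero]
  · simp [hx, wgt, cutIntegrand]

/-- The double integral with kernel `ρ` and localization `lam`, i.e. the `p`-th power of the
seminorm in the middle of the two-sided estimate. -/
def rhoEnergy (d : ℕ) (Ω : Set (Euc d)) (γ lam : Euc d → ℝ) (ρ : ℝ → ℝ) (p β δ : ℝ)
    (u : Euc d → ℝ) : ℝ≥0∞ :=
  ∫⁻ x in Ω, ∫⁻ y in Ω,
    ENNReal.ofReal (γ x ^ (-β) * ρ (‖x - y‖ / (δ * lam x)) * |u y - u x| ^ p /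
      (δ * lam x) ^ ((d : ℝ) + p))

lemma rhoEnergy_le {d : ℕ} {Ω : Set (Euc d)} {γ lam u : Euc d → ℝ} {ρ : ℝ → ℝ}
    {p β δ κ₀ M : ℝ} (hp : 1 < p) (hκ₀ : 1 ≤ κ₀)
    (hΩ : MeasurableSet Ω) (hδ : 0 < δ) (hγ0 : ∀ x ∈ Ω, 0 < γ x)
    (hη0 : ∀ x ∈ Ω, 0 < etaD Ω x)
    (hM : ∀ x, ρ x ≤ M) (hM0 : 0 < M)
    (hρsupp : ∀ x : ℝ, 1 ≤ |x| → ρ x = 0)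
    (hlam : ∀ x ∈ Ω, 0 < lam x ∧ κ₀⁻¹ * etaD Ω x ≤ lam x ∧ lam x ≤ κ₀ * etaD Ω x) :
    rhoEnergy d Ω γ lam ρ p β δ u ≤ ENNReal.ofReal (M * κ₀ ^ ((d : ℝ) + p)) *
      (ENNReal.ofReal (δ ^ (-((d : ℝ) + p))) *
        cutEnergy (wgt Ω γ p β) (etaD Ω) u p (κ₀ * δ)) := by
  rw [rhoEnergy, cutEnergy, ← lintegral_indicator hΩ, ← mul_assoc,
    ← ENNReal.ofReal_mul (by positivity), ← lintegral_const_mul' _ _ ENNReal.ofReal_ne_top]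
  refine lintegral_mono fun x => ?_
  by_cases hx : x ∈ Ω
  swap
  · simp [hx]
  simp only [indicator_of_mem hx]
  rw [← lintegral_const_mul' _ _ ENNReal.ofReal_ne_top]
  refine (setLIntegral_le_lintegral _ _).trans (lintegral_mono fun y => ?_)
  obtain ⟨l0, l1, l2⟩ := hlam x hx
  have h1 := hγ0 x hx
  have h2 := hη0 x hx
  have hδl : 0 < δ * lam x := by positivity
  rcases le_or_gt (δ * lam x) (dist x y) with hy | hy
  · rw [hρsupp]
    · simp
    · rw [← dist_eq_norm, abs_of_nonneg (by positivity), one_le_div hδl]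
      exact hy
  · have hy' : dist x y < κ₀ * δ * etaD Ω x := by nlinarith
    rw [cutIntegrand, if_pos hy', wgt, indicator_of_mem hx, ← ENNReal.ofReal_mul (by positivity),
      ← ENNReal.ofReal_mul (by positivity)]
    apply ENNReal.ofReal_le_ofReal
    have hs : (0 : ℝ) ≤ (d : ℝ) + p := by positivity
    have hpow : (δ * lam x) ^ (-((d : ℝ) + p)) ≤
        κ₀ ^ ((d : ℝ) + p) * (δ ^ (-((d : ℝ) + p)) * etaD Ω x ^ (-((d : ℝ) + p))) := by
      calc (δ * lam x) ^ (-((d : ℝ) + p)) ≤ (δ * (κ₀⁻¹ * etaD Ω x)) ^ (-((d : ℝ) + p)) :=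
            Real.rpow_le_rpow_of_nonpos (by positivity) (by gcongr) (by linarith)
        _ = _ := by
            rw [Real.mul_rpow hδ.le (by positivity), Real.mul_rpow (by positivity) h2.le,
              Real.inv_rpow (by positivity), Real.rpow_neg (by positivity : (0 : ℝ) ≤ κ₀),
              inv_inv]
            ring
    rw [div_eq_mul_inv, ← Real.rpow_neg (by positivity)]
    calc _ ≤ γ x ^ (-β) * M * |u y - u x| ^ p *
          (κ₀ ^ ((d : ℝ) + p) * (δ ^ (-((d : ℝ) + p)) * etaD Ω x ^ (-((d : ℝ) + p)))) := by
          gcongr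
          exact hM _
      _ = _ := by ring

lemma le_rhoEnergy {d : ℕ} {Ω : Set (Euc d)} {γ lam u : Euc d → ℝ} {ρ : ℝ → ℝ}
    {p β δ κ₀ b cρ : ℝ} (hp : 1 < p) (hκ₀ : 1 ≤ κ₀)
    (hΩ : MeasurableSet Ω) (hδ : 0 < δ) (hδ1 : δ ≤ 1) (hγ0 : ∀ x ∈ Ω, 0 < γ x)
    (hη0 : ∀ x ∈ Ω, 0 < etaD Ω x)
    (hb : 0 < b) (hcρ : cρ ∈ Set.Ioo (0 : ℝ) 1) (hρlb : ∀ x ∈ Set.Icc (0 : ℝ) cρ, b ≤ ρ x)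
    (hlam : ∀ x ∈ Ω, 0 < lam x ∧ κ₀⁻¹ * etaD Ω x ≤ lam x ∧ lam x ≤ κ₀ * etaD Ω x) :
    ENNReal.ofReal (b * κ₀ ^ (-((d : ℝ) + p))) *
      (ENNReal.ofReal (δ ^ (-((d : ℝ) + p))) *
        cutEnergy (wgt Ω γ p β) (etaD Ω) u p (cρ / κ₀ * δ)) ≤
    rhoEnergy d Ω γ lam ρ p β δ u := by
  rw [rhoEnergy, cutEnergy, ← lintegral_indicator hΩ, ← mul_assoc,
    ← ENNReal.ofReal_mul (by positivity), ← lintegral_const_mul' _ _ ENNReal.ofReal_ne_top]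
  refine lintegral_mono fun x => ?_
  by_cases hx : x ∈ Ω
  swap
  · simp [hx, wgt, cutIntegrand]
  simp only [indicator_of_mem hx]
  rw [← lintegral_const_mul' _ _ ENNReal.ofReal_ne_top, ← lintegral_indicator hΩ]
  refine lintegral_mono fun y => ?_
  obtain ⟨l0, l1, l2⟩ := hlam x hx
  have h1 := hγ0 x hx
  have h2 := hη0 x hx
  obtain ⟨c0, c1⟩ := hcρ
  have hδl : 0 < δ * lam x := by positivity
  by_cases hy : dist x y < cρ / κ₀ * δ * etaD Ω x
  swap
  · simp [cutIntegrand, hy]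
  have hyl : dist x y ≤ cρ * (δ * lam x) := by
    calc dist x y ≤ cρ * (δ * (κ₀⁻¹ * etaD Ω x)) := by
          rw [show cρ * (δ * (κ₀⁻¹ * etaD Ω x)) = cρ / κ₀ * δ * etaD Ω x by ring]
          exact hy.le
      _ ≤ _ := by gcongr
  have hyΩ : y ∈ Ω := by
    refine ball_etaD_subset hx ?_
    rw [mem_ball, dist_comm]
    have : cρ / κ₀ ≤ 1 := by rw [div_le_one (by positivity)]; linarith
    have : cρ / κ₀ * δ ≤ 1 := mul_le_one₀ this hδ.le hδ1
    nlinarith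
  simp only [indicator_of_mem hyΩ]
  rw [cutIntegrand, if_pos hy, wgt, indicator_of_mem hx, ← ENNReal.ofReal_mul (by positivity),
    ← ENNReal.ofReal_mul (by positivity)]
  apply ENNReal.ofReal_le_ofReal
  have hpow : κ₀ ^ (-((d : ℝ) + p)) * (δ ^ (-((d : ℝ) + p)) * etaD Ω x ^ (-((d : ℝ) + p))) ≤
      (δ * lam x) ^ (-((d : ℝ) + p)) := by
    have hs : (0 : ℝ) ≤ (d : ℝ) + p := by positivity
    calc _ = (δ * (κ₀ * etaD Ω x)) ^ (-((d : ℝ) + p)) := by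
          rw [Real.mul_rpow hδ.le (by positivity), Real.mul_rpow (by positivity) h2.le]
          ring
      _ ≤ _ := Real.rpow_le_rpow_of_nonpos (by positivity) (by gcongr) (by linarith)
  have hρ : b ≤ ρ (‖x - y‖ / (δ * lam x)) := by
    refine hρlb _ ⟨by positivity, ?_⟩
    rwa [div_le_iff₀ hδl, ← dist_eq_norm]
  rw [div_eq_mul_inv, ← Real.rpow_neg (by positivity)]
  calc _ = γ x ^ (-β) * b * |u y - u x| ^ p *
        (κ₀ ^ (-((d : ℝ) + p)) * (δ ^ (-((d : ℝ) + p)) * etaD Ω x ^ (-((d : ℝ) + p)))) := by ring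
    _ ≤ _ := by
        have : 0 ≤ ρ (‖x - y‖ / (δ * lam x)) := hb.le.trans hρ
        gcongr

/-! ### The equivalence -/

/-- **Equivalence of nonlocal seminorms defined with a general kernel `ρ` and a general
heterogeneous localization `λ`.** There exist constants `0 < c ≤ C` depending only on
`d, p, β, ρ, κ₀, κ₁` such that for every admissible setting, every
`δ ∈ (0, 1/(3κ₀²κ₁))`, and every measurable `u`,
`c·[u]_{𝔚^p[δ](Ω;β)} ≤ (∬ γ(x)^{-β} ρ(|x-y|/(δλ(x))) |u(y)-u(x)|^p (δλ(x))^{-(d+p)})^{1/p}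
  ≤ C·[u]_{𝔚^p[δ](Ω;β)}`. -/
theorem stmt5 (d : ℕ) (hd : 1 ≤ d) (p β κ₀ κ₁ : ℝ) (hp : 1 < p)
    (hκ₀ : 1 ≤ κ₀) (hκ₁ : 1 ≤ κ₁)
    (ρ : ℝ → ℝ) (hρnn : ∀ x, 0 ≤ ρ x) (hρmeas : Measurable ρ)
    (hρbdd : ∃ M : ℝ, ∀ x, ρ x ≤ M) (hρeven : ∀ x, ρ (-x) = ρ x)
    (hρmono : AntitoneOn ρ (Set.Ici 0)) (hρsupp : ∀ x : ℝ, 1 ≤ |x| → ρ x = 0)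
    (b cρ : ℝ) (hb : 0 < b) (hcρ : cρ ∈ Set.Ioo (0 : ℝ) 1)
    (hρlb : ∀ x ∈ Set.Icc (0 : ℝ) cρ, b ≤ ρ x) :
    ∃ c C : ℝ, 0 < c ∧ c ≤ C ∧
      ∀ (Ωstar Γ : Set (Euc d)), IsOpen Ωstar → Bornology.IsBounded Ωstar →
        Γ.Finite → Γ.Nonempty → Γ ⊆ closure Ωstar →
        ∀ γ lam : Euc d → ℝ,
          (∀ x ∈ Ωstar \ Γ, 0 < γ x) →
          LipschitzOnWith (Real.toNNReal κ₁) γ (Ωstar \ Γ) →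
          (∀ x ∈ Ωstar \ Γ, Metric.infDist x Γ ≤ κ₀ * γ x) →
          (∀ x ∈ Ωstar \ Γ, 0 < lam x ∧
            κ₀⁻¹ * etaD (Ωstar \ Γ) x ≤ lam x ∧ lam x ≤ κ₀ * etaD (Ωstar \ Γ) x) →
          (∀ x ∈ Ωstar \ Γ, ∀ y ∈ Ωstar \ Γ, |lam x - lam y| ≤ κ₁ * ‖x - y‖) →
          ∀ δ : ℝ, 0 < δ → δ < 1 / (3 * κ₀ ^ 2 * κ₁) →
          ∀ u : Euc d → ℝ, Measurable u →
            ENNReal.ofReal c * semiW d (Ωstar \ Γ) γ p β δ u ≤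
              (∫⁻ x in Ωstar \ Γ, ∫⁻ y in Ωstar \ Γ,
                ENNReal.ofReal (γ x ^ (-β) * ρ (‖x - y‖ / (δ * lam x)) * |u y - u x| ^ p /
                  (δ * lam x) ^ ((d : ℝ) + p))) ^ (1 / p) ∧
            (∫⁻ x in Ωstar \ Γ, ∫⁻ y in Ωstar \ Γ,
                ENNReal.ofReal (γ x ^ (-β) * ρ (‖x - y‖ / (δ * lam x)) * |u y - u x| ^ p /
                  (δ * lam x) ^ ((d : ℝ) + p))) ^ (1 / p) ≤
              ENNReal.ofReal C * semiW d (Ωstar \ Γ) γ p β δ u := by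

  obtain ⟨M, hM⟩ := hρbdd
  obtain ⟨n, hn⟩ := exists_pow_lt_of_lt_one
    (show (0 : ℝ) < cρ / κ₀ / κ₀ by have := hcρ.1; positivity) (show (3 / 4 : ℝ) < 1 by norm_num)
  have hc0 := hcρ.1
  have hM0 : 0 < M := hb.trans_le ((hρlb 0 ⟨le_rfl, hc0.le⟩).trans (hM 0))
  have hN := normC_pos hd hp
  set N := normC d p
  set s : ℝ := (d : ℝ) + p
  set K : ℝ := 2 ^ |-β| * 2 ^ |-s| with hKdef
  have hK0 : 0 < K := by positivity
  set D : ℝ := (2 ^ p * ((1 + K) * 2 ^ d)) ^ n with hD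
  have hD0 : 0 < D := by positivity
  set A : ℝ := N * D / (b * κ₀ ^ (-s)) with hA
  set B : ℝ := M * κ₀ ^ s * D / N with hB
  have hA0 : 0 < A := by positivity
  have hB0 : 0 < B := by positivity
  refine ⟨(A⁻¹) ^ (1 / p), max ((A⁻¹) ^ (1 / p)) (B ^ (1 / p)), by positivity, le_max_left _ _, ?_⟩
  intro Ωstar Γ hΩs _ hΓfin hΓne hΓcl γ lam hγ0 hγL hγd hlam _ δ hδ hδu u hu
  set Ω := Ωstar \ Γ
  have hΩ : IsOpen Ω := hΩs.sdiff hΓfin.isClosed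
  have hfr : Γ ⊆ frontier Ω := subset_frontier_diff hd hΩs hΓfin hΓcl
  have hη0 : ∀ x ∈ Ω, 0 < etaD Ω x := fun x hx => etaD_pos hΩ (hΓne.mono hfr) hx
  have hηγ : ∀ x ∈ Ω, etaD Ω x ≤ κ₀ * γ x := fun x hx =>
    (infDist_le_infDist_of_subset hfr hΓne).trans (hγd x hx)
  have hδ' : 3 * κ₀ ^ 2 * κ₁ * δ < 1 := by
    rw [lt_div_iff₀ (by positivity)] at hδu
    linarith
  have hδ1 : δ ≤ 1 := by
    have h1 : 1 ≤ κ₀ ^ 2 * κ₁ := one_le_mul_of_one_le_of_one_le (one_le_pow₀ hκ₀) hκ₁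
    nlinarith
  have hwm := measurable_wgt (p := p) (β := β) hΩ hγL.continuousOn hγ0 hη0
  have hηm : Measurable (etaD Ω) := (continuous_infDist_pt _).measurable
  -- `n` was chosen so that `(3/4)^n κ₀ δ ≤ (cρ / κ₀) δ`; monotonicity then ends the iteration.
  have hiter : cutEnergy (wgt Ω γ p β) (etaD Ω) u p (κ₀ * δ) ≤
      ENNReal.ofReal D * cutEnergy (wgt Ω γ p β) (etaD Ω) u p (cρ / κ₀ * δ) := by
    have h := cutEnergy_le_iterate (K := ENNReal.ofReal K) (T := κ₀ * δ) hwm hηm hu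
      (by linarith : 0 < p) (fun t ht0 htT x y hwx hxy => by
        have hx : x ∈ Ω := by
          by_contra hx
          exact hwx (by simp [wgt, hx])
        refine (wgt_compare hκ₀ hκ₁ hγL hγ0 hη0 hηγ ht0 ?_ hx hxy).2
        calc 3 * κ₀ * κ₁ * t ≤ 3 * κ₀ * κ₁ * (κ₀ * δ) := by gcongr
          _ = 3 * κ₀ ^ 2 * κ₁ * δ := by ring
          _ ≤ 1 := hδ'.le) (by positivity) n
    clear_value K
    have hDe : (ENNReal.ofReal (2 ^ p) * ((1 + ENNReal.ofReal K) * 2 ^ d)) ^ n =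
        ENNReal.ofReal D := by
      rw [hD, ENNReal.ofReal_pow (by positivity), ENNReal.ofReal_mul (by positivity),
        ENNReal.ofReal_mul (by positivity), ENNReal.ofReal_add zero_le_one hK0.le,
        ENNReal.ofReal_pow (by norm_num)]
      norm_num
    rw [hDe] at h
    refine h.trans ?_
    gcongr
    refine cutEnergy_mono (fun x => infDist_nonneg) ?_
    rw [← mul_assoc]
    gcongr
    rw [lt_div_iff₀ (by positivity)] at hn
    exact hn.le
  have hmono1 : cutEnergy (wgt Ω γ p β) (etaD Ω) u p δ ≤
      cutEnergy (wgt Ω γ p β) (etaD Ω) u p (κ₀ * δ) :=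
    cutEnergy_mono (fun x => infDist_nonneg) (by nlinarith)
  have hmono2 : cutEnergy (wgt Ω γ p β) (etaD Ω) u p (cρ / κ₀ * δ) ≤
      cutEnergy (wgt Ω γ p β) (etaD Ω) u p δ := by
    refine cutEnergy_mono (fun x => infDist_nonneg) (mul_le_of_le_one_left hδ.le ?_)
    rw [div_le_one (by positivity)]
    linarith [hcρ.2]
  have hsemi := nlEnergy_eq (u := u) (p := p) (β := β) hΩ.measurableSet hδ hγ0 hη0
  have hup := rhoEnergy_le (u := u) (β := β) hp hκ₀ hΩ.measurableSet hδ hγ0 hη0 hM hM0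
    hρsupp hlam
  have hlo := le_rhoEnergy (u := u) (β := β) hp hκ₀ hΩ.measurableSet hδ hδ1 hγ0 hη0 hb hcρ
    hρlb hlam
  change ENNReal.ofReal _ * semiW d Ω γ p β δ u ≤ (rhoEnergy d Ω γ lam ρ p β δ u) ^ (1 / p) ∧
    (rhoEnergy d Ω γ lam ρ p β δ u) ^ (1 / p) ≤ ENNReal.ofReal _ * semiW d Ω γ p β δ u
  set I := rhoEnergy d Ω γ lam ρ p β δ u
  set E := nlEnergy d Ω γ p β δ u with hE
  set F := cutEnergy (wgt Ω γ p β) (etaD Ω) u p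
  set z := ENNReal.ofReal (δ ^ (-s))
  have hp' : 0 ≤ 1 / p := by positivity
  have main1 : ENNReal.ofReal A⁻¹ * E ≤ I := by
    calc ENNReal.ofReal A⁻¹ * E
        ≤ ENNReal.ofReal A⁻¹ * (ENNReal.ofReal N *
            (z * (ENNReal.ofReal D * F (cρ / κ₀ * δ)))) := by
          rw [hsemi]
          gcongr
          exact hmono1.trans hiter
      _ = ENNReal.ofReal (A⁻¹ * N * D) * (z * F (cρ / κ₀ * δ)) := by
          rw [ENNReal.ofReal_mul (by positivity), ENNReal.ofReal_mul (by positivity)]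
          ring
      _ = ENNReal.ofReal (b * κ₀ ^ (-s)) * (z * F (cρ / κ₀ * δ)) := by
          congr 2
          have : κ₀ ^ (-s) ≠ 0 := by positivity
          rw [hA]
          field_simp
      _ ≤ I := hlo
  have main2 : I ≤ ENNReal.ofReal B * E := by
    calc I ≤ ENNReal.ofReal (M * κ₀ ^ s) * (z * F (κ₀ * δ)) := hup
      _ ≤ ENNReal.ofReal (M * κ₀ ^ s) * (z * (ENNReal.ofReal D * F δ)) := by
          gcongr
          exact hiter.trans (by gcongr)
      _ = ENNReal.ofReal (M * κ₀ ^ s * D) * (z * F δ) := by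
          rw [ENNReal.ofReal_mul (p := M * κ₀ ^ s) (by positivity)]
          ring
      _ = ENNReal.ofReal (B * N) * (z * F δ) := by
          congr 2
          rw [hB]
          field_simp
      _ = ENNReal.ofReal B * E := by
          rw [hsemi, ENNReal.ofReal_mul (by positivity), mul_assoc]
  constructor
  · rw [semiW, ← ENNReal.ofReal_rpow_of_nonneg (by positivity) hp', ← ENNReal.mul_rpow_of_nonneg _ _ hp']
    exact ENNReal.rpow_le_rpow main1 hp'
  · calc I ^ (1 / p) ≤ (ENNReal.ofReal B * E) ^ (1 / p) := ENNReal.rpow_le_rpow main2 hp'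
      _ = ENNReal.ofReal (B ^ (1 / p)) * semiW d Ω γ p β δ u := by
          rw [ENNReal.mul_rpow_of_nonneg _ _ hp', ENNReal.ofReal_rpow_of_nonneg (by positivity) hp',
            semiW]
      _ ≤ _ := by
          gcongr
          exact le_max_right _ _

end
end
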